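/- arXiv:1601.08132 — 2 statements merged into one kernel-verified Lean document; each statement's English description precedes it below -/
import Mathlib

section
/- (Theorem 9, Blind IA, macrocell projection.) Let T, N, K, L, M be positive integers with L ≤ N, and fix k ∈ {1,…,K}. Let: v₁,…,v_K be 1×T complex row vectors (macrocell beamforming vectors, V_i = (a/√N)(v_iᵀ ⊗ I_N)); for each l ∈ {1,…,L} with l ≠ 2, let ξ_{l,1},…,ξ_{l,T−1} be 1×T row vectors, r the N×(N−L+1) matrix consisting of the first N−L+1 columns of I_N, and q_{l,1},…,q_{l,T−1} be (N−L+1)×M complex matrices, and set V_l^f = (b₁/√N)·Σ_{i=1}^{T−1} (ξ_{l,i}ᵀ ⊗ (r·q_{l,i})); let v_f be a 1×T row vector and e₂ the last column of I_N (as an N×1 matrix), and set V₂^f = (b₂/√N)·(v_fᵀ ⊗ e₂). Let h_a and h_l (l = 1,…,L) be N×N channel matrices, h̃ an N×N matrix, e₁ the N×1 column vector equal to the sum of the first N−1 columns of I_N, D₁ = diag(e₂), D₂ = diag(e₁), and w₁, w₂ be 1×T row vectors. Assume: (i) w_s·v_iᵀ = 0 for s = 1,2 and all i ≠ k; (ii)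 w₂·ξ_{l,i}ᵀ = 0 for all i ∈ {1,…,T−1} and all l ≠ 2; (iii) w₁·v_fᵀ = 0; (iv) D₁·h̃·h_l·r = 0 for all l ≠ 2; (v) D₂·h̃·h₂·e₂ = 0. Let u₁,…,u_K ∈ ℂ^N, U_l ∈ ℂ^M (l ≠ 2), U₂ ∈ ℂ, Z ∈ ℂ^{NT}, and define the received signal y = √γ_a·(I_T ⊗ h_a)·Σ_{i=1}^{K} V_i·u_i + Σ_{l≠2} √γ_l·(I_T ⊗ h_l)·V_l^f·U_l + √γ₂·(I_T ⊗ h₂)·V₂^f·U₂ + Z, and the projection matrix P = Σ_{s=1}^{2} (w_s ⊗ (D_s·h̃)). Then P·y = (a/√N)·(Σ_{s=1}^{2} (w_s·v_kᵀ)·D_s)·(√γ_a·h̃·h_a)·u_k + P·Z. -/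
open Matrix
open scoped Kronecker

/-!
By the mixed-product rule, stage `s` of the projection turns a signal `c ⊗ B` sent through the
channel `h` into `(w s * c) ⊗ (D s * h̃ * h * B)`. Each interfering signal is nulled at every stage
by one of the two factors: in time, because `w s` is orthogonal to its beamforming vector, or in
space, because `D s * h̃` annihilates its image under the channel. The desired signal has `B = 1`,
and its time factor is the scalar `w s * c`.
-/

theorem kronecker_eq_one_kronecker_smul_of_unique {R ι m n : Type*} [Semiring R] [Unique ι]
    [DecidableEq ι] (A : Matrix ι ι R) (B : Matrix m n R) :
    A ⊗ₖ B = (1 : Matrix ι ι R) ⊗ₖ (A default default • B) := by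
  ext ⟨i, _⟩ ⟨j, _⟩
  simp [Unique.eq_default i, Unique.eq_default j]

theorem kronecker_sum {R σ l m n p : Type*} [Semiring R] (S : Finset σ) (A : Matrix l m R)
    (B : σ → Matrix n p R) :
    A ⊗ₖ ∑ s ∈ S, B s = ∑ s ∈ S, A ⊗ₖ B s :=
  map_sum (kroneckerBilinear (R := ℕ) A) B S

section StagedProjection

variable {R ι τ ν₁ ν₂ ν₃ σ : Type*} [CommSemiring R] [Fintype σ]

/-- The receiver's projection `P = ∑ s, w s ⊗ F s`: at stage `s` the row vector `w s` combines the
time slots and `F s` (the paper's `D s * h̃`) the antennas. For row vectors the index `ι` is a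
one-element type. -/
def stagedProjection (w : σ → Matrix ι τ R) (F : σ → Matrix ν₁ ν₂ R) :
    Matrix (ι × ν₁) (τ × ν₂) R :=
  ∑ s, w s ⊗ₖ F s

variable [Fintype τ] [DecidableEq τ] [Fintype ν₂] [Fintype ν₃]
  (w : σ → Matrix ι τ R) (F : σ → Matrix ν₁ ν₂ R)

theorem stagedProjection_mul_kronecker {κ μ : Type*} (h : Matrix ν₂ ν₃ R) (c : Matrix τ κ R)
    (B : Matrix ν₃ μ R) :
    stagedProjection w F * (((1 : Matrix τ τ R) ⊗ₖ h) * (c ⊗ₖ B)) =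
      ∑ s, (w s * c) ⊗ₖ (F s * h * B) := by
  simp only [stagedProjection, Matrix.sum_mul, ← mul_kronecker_mul, Matrix.one_mul,
    Matrix.mul_assoc]

variable {w F}

theorem stagedProjection_mul_kronecker_eq_zero {κ μ : Type*} {h : Matrix ν₂ ν₃ R}
    {c : Matrix τ κ R} {B : Matrix ν₃ μ R} (hnull : ∀ s, w s * c = 0 ∨ F s * h * B = 0) :
    stagedProjection w F * (((1 : Matrix τ τ R) ⊗ₖ h) * (c ⊗ₖ B)) = 0 := by
  rw [stagedProjection_mul_kronecker]
  refine Finset.sum_eq_zero fun s _ => ?_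
  rcases hnull s with htime | hspace
  · rw [htime, zero_kronecker]
  · rw [hspace, kronecker_zero]

theorem stagedProjection_mul_sum_kronecker_eq_zero {κ μ θ : Type*} [Fintype θ]
    {h : Matrix ν₂ ν₃ R} {c : θ → Matrix τ κ R} {B : θ → Matrix ν₃ μ R}
    (hnull : ∀ i s, w s * c i = 0 ∨ F s * h * B i = 0) :
    stagedProjection w F * (((1 : Matrix τ τ R) ⊗ₖ h) * ∑ i, c i ⊗ₖ B i) = 0 := by
  simp only [Matrix.mul_sum, stagedProjection_mul_kronecker_eq_zero (hnull _),
    Finset.sum_const_zero]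

variable [DecidableEq ν₃] [Unique ι] [DecidableEq ι]

theorem stagedProjection_mul_kronecker_one (w : σ → Matrix ι τ R) (F : σ → Matrix ν₁ ν₂ R)
    (h : Matrix ν₂ ν₃ R) (c : Matrix τ ι R) :
    stagedProjection w F * (((1 : Matrix τ τ R) ⊗ₖ h) * (c ⊗ₖ (1 : Matrix ν₃ ν₃ R))) =
      (1 : Matrix ι ι R) ⊗ₖ ((∑ s, (w s * c) default default • F s) * h) := by
  simp only [stagedProjection_mul_kronecker, Matrix.mul_one,
    kronecker_eq_one_kronecker_smul_of_unique (w _ * c), Matrix.sum_mul, Matrix.smul_mul,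
    kronecker_sum]

theorem stagedProjection_mul_sum_kronecker_one_mul {κ m : Type*} [Fintype ι] [Fintype κ] {k : κ}
    {c : κ → Matrix τ ι R} (horth : ∀ i, i ≠ k → ∀ s, w s * c i = 0) (h : Matrix ν₂ ν₃ R)
    (u : κ → Matrix (ι × ν₃) m R) :
    stagedProjection w F *
        (((1 : Matrix τ τ R) ⊗ₖ h) * ∑ i, (c i ⊗ₖ (1 : Matrix ν₃ ν₃ R)) * u i) =
      ((1 : Matrix ι ι R) ⊗ₖ ((∑ s, (w s * c k) default default • F s) * h)) * u k := by
  have other_users_vanish : ∀ i, i ≠ k →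
      stagedProjection w F * (((1 : Matrix τ τ R) ⊗ₖ h) * ((c i ⊗ₖ (1 : Matrix ν₃ ν₃ R)) * u i)) =
        0 := fun i hi => by
    rw [← Matrix.mul_assoc (_ ⊗ₖ h), ← Matrix.mul_assoc,
      stagedProjection_mul_kronecker_eq_zero fun s => .inl (horth i hi s), Matrix.zero_mul]
  rw [Matrix.mul_sum, Matrix.mul_sum, Fintype.sum_eq_single k other_users_vanish,
    ← Matrix.mul_assoc (_ ⊗ₖ h), ← Matrix.mul_assoc, stagedProjection_mul_kronecker_one]

end StagedProjection

theorem blindIA_macrocell_projection_general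
    {R ι τ ν σ κ Λ θ ρ μ₁ μ₂ m : Type*} [CommSemiring R]
    [Unique ι] [Fintype ι] [DecidableEq ι] [Fintype τ] [DecidableEq τ] [Fintype ν]
    [DecidableEq ν] [Fintype σ] [Fintype κ] [Fintype θ] [Fintype ρ] [Fintype μ₁] [Fintype μ₂]
    (k : κ) (G₁ : Finset Λ) (l₂ : Λ) (α β₁ β₂ g : R) (gf : Λ → R)
    (v : κ → Matrix ι τ R)
    (ξ : Λ → θ → Matrix ι τ R) (r : Matrix ν ρ R) (q : Λ → θ → Matrix ρ μ₁ R)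
    (vf : Matrix ι τ R) (e : Matrix ν μ₂ R)
    (hca : Matrix ν ν R) (hc : Λ → Matrix ν ν R) (htil : Matrix ν ν R)
    (w : σ → Matrix ι τ R) (D : σ → Matrix ν ν R)
    (hwv : ∀ i, i ≠ k → ∀ s, w s * (v i)ᵀ = 0)
    (hG₁ : ∀ l ∈ G₁, ∀ s, (∀ i, w s * (ξ l i)ᵀ = 0) ∨ D s * htil * hc l * r = 0)
    (hG₂ : ∀ s, w s * vfᵀ = 0 ∨ D s * htil * hc l₂ * e = 0)
    (u : κ → Matrix (ι × ν) m R) (U : Λ → Matrix (ι × μ₁) m R) (U₂ : Matrix (ι × μ₂) m R)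
    (Z : Matrix (τ × ν) m R) :
    stagedProjection w (fun s => D s * htil) *
        (g • (((1 : Matrix τ τ R) ⊗ₖ hca) *
            ∑ i, (α • ((v i)ᵀ ⊗ₖ (1 : Matrix ν ν R))) * u i)
          + ∑ l ∈ G₁, gf l • (((1 : Matrix τ τ R) ⊗ₖ hc l) *
            ((β₁ • ∑ i, (ξ l i)ᵀ ⊗ₖ (r * q l i)) * U l))
          + gf l₂ • (((1 : Matrix τ τ R) ⊗ₖ hc l₂) * ((β₂ • (vfᵀ ⊗ₖ e)) * U₂))
          + Z) =
      α • (((1 : Matrix ι ι R) ⊗ₖ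
          ((∑ s, (w s * (v k)ᵀ) default default • D s) * (g • (htil * hca)))) * u k)
        + stagedProjection w (fun s => D s * htil) * Z := by
  set P := stagedProjection w fun s => D s * htil
  have macrocell : P * (((1 : Matrix τ τ R) ⊗ₖ hca) *
      ∑ i, ((v i)ᵀ ⊗ₖ (1 : Matrix ν ν R)) * u i) =
      ((1 : Matrix ι ι R) ⊗ₖ
        ((∑ s, (w s * (v k)ᵀ) default default • D s) * (htil * hca))) * u k := by
    simp only [P, stagedProjection_mul_sum_kronecker_one_mul hwv, ← Matrix.mul_assoc,
      Matrix.sum_mul, Matrix.smul_mul]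
  have group_one : ∀ l ∈ G₁, P * (gf l • (((1 : Matrix τ τ R) ⊗ₖ hc l) *
      ((β₁ • ∑ i, (ξ l i)ᵀ ⊗ₖ (r * q l i)) * U l))) = 0 := fun l hl => by
    have beam_nulled : P * (((1 : Matrix τ τ R) ⊗ₖ hc l) * ∑ i, (ξ l i)ᵀ ⊗ₖ (r * q l i)) = 0 :=
      stagedProjection_mul_sum_kronecker_eq_zero fun i s =>
        (hG₁ l hl s).imp (· i) fun hr => by rw [← Matrix.mul_assoc, hr, Matrix.zero_mul]
    simp only [Matrix.mul_smul, Matrix.smul_mul, ← Matrix.mul_assoc _ _ (U l), beam_nulled,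
      Matrix.zero_mul, smul_zero]
  have group_two : P * (gf l₂ • (((1 : Matrix τ τ R) ⊗ₖ hc l₂) *
      ((β₂ • (vfᵀ ⊗ₖ e)) * U₂))) = 0 := by
    have beam_nulled : P * (((1 : Matrix τ τ R) ⊗ₖ hc l₂) * (vfᵀ ⊗ₖ e)) = 0 :=
      stagedProjection_mul_kronecker_eq_zero hG₂
    simp only [Matrix.mul_smul, Matrix.smul_mul, ← Matrix.mul_assoc _ _ U₂, beam_nulled,
      Matrix.zero_mul, smul_zero]
  rw [Matrix.mul_add, Matrix.mul_add, Matrix.mul_add, group_two, Matrix.mul_sum G₁,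
    Finset.sum_eq_zero group_one, add_zero, add_zero]
  simp only [Matrix.smul_mul, Matrix.mul_smul, ← Finset.smul_sum, macrocell, kronecker_smul,
    smul_comm g α]

/-- Theorem 9, Blind IA, macrocell projection: the projection
`P = Σ_s (w_s ⊗ (D_s·h̃))` removes both intra-cell interference (messages to the
other `K−1` macrocell users) and inter-cell interference (all femtocell
transmissions) at macrocell receiver `k`, leaving the effective channel
`(a/√N)·(Σ_s (w_s·v_kᵀ)·D_s)·(√γ_a·h̃·h_a)` acting on `u_k`.
The group-`G₂` femtocell is indexed by a distinguished `l₂` (the paper's `l = 2`);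
vectors in `ℂ^N`, `ℂ^M`, `ℂ` are column matrices over `Fin 1 × Fin N`,
`Fin 1 × Fin M`, `Fin 1 × Fin 1` respectively, matching the Kronecker block
structure. -/
theorem blindIA_macrocell_projection
    (T N K L M : ℕ) (hT : 0 < T) (hN : 0 < N) (hK : 0 < K) (hL : 0 < L)
    (hM : 0 < M) (hLN : L ≤ N)
    (k : Fin K) (l₂ : Fin L)
    (a b₁ b₂ : ℝ) (hapos : 0 < a) (hb₁ : 0 < b₁) (hb₂ : 0 < b₂)
    (γa : ℝ) (hγa : 0 < γa) (γ : Fin L → ℝ) (hγ : ∀ l, 0 < γ l)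
    -- macrocell beamforming row vectors and matrices
    (v : Fin K → Matrix (Fin 1) (Fin T) ℂ)
    (V : Fin K → Matrix (Fin T × Fin N) (Fin 1 × Fin N) ℂ)
    (hV : ∀ i, V i = ((a / Real.sqrt N : ℝ) : ℂ) •
      ((v i)ᵀ ⊗ₖ (1 : Matrix (Fin N) (Fin N) ℂ)))
    -- group G₁ femtocell beamforming data
    (ξ : Fin L → Fin (T - 1) → Matrix (Fin 1) (Fin T) ℂ)
    (q : Fin L → Fin (T - 1) → Matrix (Fin (N - L + 1)) (Fin M) ℂ)
    (r : Matrix (Fin N) (Fin (N - L + 1)) ℂ)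
    (hr : r = Matrix.of fun (i : Fin N) (j : Fin (N - L + 1)) => if (i : ℕ) = (j : ℕ) then 1 else 0)
    (Vf : Fin L → Matrix (Fin T × Fin N) (Fin 1 × Fin M) ℂ)
    (hVf : ∀ l, Vf l = ((b₁ / Real.sqrt N : ℝ) : ℂ) •
      ∑ i : Fin (T - 1), ((ξ l i)ᵀ ⊗ₖ (r * q l i)))
    -- group G₂ femtocell beamforming data
    (vf : Matrix (Fin 1) (Fin T) ℂ)
    (e₁ e₂ : Matrix (Fin N) (Fin 1) ℂ)
    (he₁ : e₁ = Matrix.of fun (i : Fin N) (_ : Fin 1) => if (i : ℕ) < N - 1 then 1 else 0)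
    (he₂ : e₂ = Matrix.of fun (i : Fin N) (_ : Fin 1) => if (i : ℕ) = N - 1 then 1 else 0)
    (Vg : Matrix (Fin T × Fin N) (Fin 1 × Fin 1) ℂ)
    (hVg : Vg = ((b₂ / Real.sqrt N : ℝ) : ℂ) • (vfᵀ ⊗ₖ e₂))
    -- channels and the projection building blocks
    (hca : Matrix (Fin N) (Fin N) ℂ) (hc : Fin L → Matrix (Fin N) (Fin N) ℂ)
    (htil : Matrix (Fin N) (Fin N) ℂ)
    (D₁ D₂ : Matrix (Fin N) (Fin N) ℂ)
    (hD₁ : D₁ = Matrix.diagonal fun i => e₂ i 0)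
    (hD₂ : D₂ = Matrix.diagonal fun i => e₁ i 0)
    (w₁ w₂ : Matrix (Fin 1) (Fin T) ℂ)
    -- orthogonality assumptions (i)-(v)
    (hw₁v : ∀ i, i ≠ k → w₁ * (v i)ᵀ = 0)
    (hw₂v : ∀ i, i ≠ k → w₂ * (v i)ᵀ = 0)
    (hw₂ξ : ∀ l, l ≠ l₂ → ∀ i, w₂ * (ξ l i)ᵀ = 0)
    (hw₁vf : w₁ * vfᵀ = 0)
    (hD₁r : ∀ l, l ≠ l₂ → D₁ * htil * hc l * r = 0)
    (hD₂e : D₂ * htil * hc l₂ * e₂ = 0)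
    -- data, noise, received signal, projection
    (u : Fin K → Matrix (Fin 1 × Fin N) (Fin 1) ℂ)
    (U : Fin L → Matrix (Fin 1 × Fin M) (Fin 1) ℂ)
    (U₂ : Matrix (Fin 1 × Fin 1) (Fin 1) ℂ)
    (Z : Matrix (Fin T × Fin N) (Fin 1) ℂ)
    (y : Matrix (Fin T × Fin N) (Fin 1) ℂ)
    (hy : y = (Real.sqrt γa : ℂ) •
            (((1 : Matrix (Fin T) (Fin T) ℂ) ⊗ₖ hca) * (∑ i : Fin K, V i * u i))
        + (∑ l ∈ Finset.univ.erase l₂, (Real.sqrt (γ l) : ℂ) •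
            (((1 : Matrix (Fin T) (Fin T) ℂ) ⊗ₖ hc l) * (Vf l * U l)))
        + (Real.sqrt (γ l₂) : ℂ) •
            (((1 : Matrix (Fin T) (Fin T) ℂ) ⊗ₖ hc l₂) * (Vg * U₂))
        + Z)
    (P : Matrix (Fin 1 × Fin N) (Fin T × Fin N) ℂ)
    (hP : P = w₁ ⊗ₖ (D₁ * htil) + w₂ ⊗ₖ (D₂ * htil)) :
    P * y = ((a / Real.sqrt N : ℝ) : ℂ) •
      (((1 : Matrix (Fin 1) (Fin 1) ℂ) ⊗ₖ
          (((w₁ * (v k)ᵀ) 0 0 • D₁ + (w₂ * (v k)ᵀ) 0 0 • D₂) *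
            ((Real.sqrt γa : ℂ) • (htil * hca)))) * u k)
      + P * Z := by
  simpa only [hy, hP, hV, hVf, hVg, stagedProjection, Fin.sum_univ_two, cons_val_zero,
    cons_val_one, Fin.default_eq_zero] using
    blindIA_macrocell_projection_general k (Finset.univ.erase l₂) l₂ _ _ _ _ _ v ξ r q vf e₂
      hca hc htil ![w₁, w₂] ![D₁, D₂]
      (fun i hi => Fin.forall_fin_two.2 ⟨hw₁v i hi, hw₂v i hi⟩)
      (fun l hl => Fin.forall_fin_two.2
        ⟨.inr (hD₁r l (Finset.ne_of_mem_erase hl)), .inl (hw₂ξ l (Finset.ne_of_mem_erase hl))⟩)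
      (Fin.forall_fin_two.2 ⟨.inl hw₁vf, .inr hD₂e⟩) u U U₂ Z
end

section
/- (Theorem 13, Blind IA, group-G₂ femtocell projection.) Let T, N, K, L, M, p be positive integers. Let v₁,…,v_K be 1×T complex row vectors (macrocell beamforming vectors, V_i = (a/√N)(v_iᵀ ⊗ I_N)); for each l ∈ {1,…,L} with l ≠ 2, let ξ_{l,1},…,ξ_{l,T−1} be 1×T row vectors, r an N×p complex matrix, q_{l,1},…,q_{l,T−1} be p×M complex matrices, and V_l^f = (b₁/√N)·Σ_{i=1}^{T−1} (ξ_{l,i}ᵀ ⊗ (r·q_{l,i})); let v_g be a 1×T row vector, e₂ an N×1 column vector, and V^g = (b₂/√N)·(v_gᵀ ⊗ e₂). Let h_g, h_A, and h_l (l ≠ 2) be N×N complex channel matrices, γ_g, γ_A, γ_l > 0 reals, w a 1×T complex row vector and W a 1×N complex row vector. Assume w·v_iᵀ = 0 for all i ∈ {1,…,K} and W·h_l·r = 0 for all l ≠ 2. Let U ∈ ℂ, u₁,…,u_K ∈ ℂ^N, U_l ∈ ℂ^M, Z ∈ ℂ^{NT}, and define y = √γ_g·(I_T ⊗ h_g)·V^g·U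 + √γ_A·(I_T ⊗ h_A)·Σ_{i=1}^{K} V_i·u_i + Σ_{l≠2} √γ_l·(I_T ⊗ h_l)·V_l^f·U_l + Z, and P = w ⊗ W. Then P·y = (b₂/√N)·(w·v_gᵀ)·(√γ_g·W·h_g·e₂)·U + P·Z. -/
open Matrix
open scoped Kronecker

/-!
By the mixed-product rule `(A ⊗ₖ B) * (C ⊗ₖ D) = (A * C) ⊗ₖ (B * D)`, the projection `w ⊗ₖ W` acts
on a transmission through `1 ⊗ₖ H` separately in time (`w`) and in space (`W * H`). Macrocell
transmissions die in the time factor, group-G₁ transmissions in the space factor, and for the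
receiver's own signal the time factor is the scalar `w * vgᵀ`.
-/

section Projection

variable {R α β τ ν ι m n o k : Type*} [CommSemiring R] [Fintype τ] [Fintype ν] [DecidableEq τ]

theorem kronecker_mul_one_kronecker_mul_kronecker
    (w : Matrix α τ R) (W : Matrix β ν R) (H : Matrix ν n R) [Fintype n]
    (A : Matrix τ m R) (B : Matrix n o R) :
    (w ⊗ₖ W) * (((1 : Matrix τ τ R) ⊗ₖ H) * (A ⊗ₖ B)) = (w * A) ⊗ₖ (W * H * B) := by
  rw [← mul_kronecker_mul, ← mul_kronecker_mul, Matrix.one_mul, Matrix.mul_assoc]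

theorem kronecker_eq_smul_one_kronecker [Unique α] [DecidableEq α]
    (A : Matrix α α R) (B : Matrix m n R) :
    A ⊗ₖ B = A default default • ((1 : Matrix α α R) ⊗ₖ B) := by
  have hA : A = A default default • (1 : Matrix α α R) := by
    ext i j
    simp [Unique.eq_default i, Unique.eq_default j]
  rw [← smul_kronecker, ← hA]

variable [Fintype m] [Fintype n] [Fintype o]
  (w : Matrix α τ R) (W : Matrix β ν R) (H : Matrix ν n R)

theorem projection_mul_sum_eq_zero_of_time_orthogonal [Fintype ι] (c : R)
    {A : ι → Matrix τ m R} (hwA : ∀ i, w * A i = 0)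
    (B : ι → Matrix n o R) (x : ι → Matrix (m × o) k R) :
    (w ⊗ₖ W) * (((1 : Matrix τ τ R) ⊗ₖ H) * ∑ i, (c • (A i ⊗ₖ B i)) * x i) = 0 := by
  simp only [Matrix.mul_sum]
  refine Finset.sum_eq_zero fun i _ => ?_
  have time_factor : (w ⊗ₖ W) * (((1 : Matrix τ τ R) ⊗ₖ H) * (A i ⊗ₖ B i)) = 0 := by
    rw [kronecker_mul_one_kronecker_mul_kronecker, hwA i, zero_kronecker]
  rw [Matrix.smul_mul, Matrix.mul_smul, Matrix.mul_smul, ← Matrix.mul_assoc (1 ⊗ₖ H),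
    ← Matrix.mul_assoc (w ⊗ₖ W), time_factor, Matrix.zero_mul, smul_zero]

theorem projection_mul_eq_zero_of_space_orthogonal {ρ : Type*} [Fintype ρ] [Fintype ι] (c : R)
    {r : Matrix n ρ R} (hWr : W * H * r = 0)
    (A : ι → Matrix τ m R) (q : ι → Matrix ρ o R) (x : Matrix (m × o) k R) :
    (w ⊗ₖ W) * (((1 : Matrix τ τ R) ⊗ₖ H) * ((c • ∑ i, A i ⊗ₖ (r * q i)) * x)) = 0 := by
  have space_factor (i : ι) :
      (w ⊗ₖ W) * (((1 : Matrix τ τ R) ⊗ₖ H) * (A i ⊗ₖ (r * q i))) = 0 := by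
    rw [kronecker_mul_one_kronecker_mul_kronecker, ← Matrix.mul_assoc, hWr, Matrix.zero_mul,
      kronecker_zero]
  rw [← Matrix.mul_assoc (1 ⊗ₖ H), ← Matrix.mul_assoc (w ⊗ₖ W), Matrix.mul_smul, Matrix.mul_smul,
    Matrix.mul_sum, Matrix.mul_sum, Finset.sum_eq_zero fun i _ => space_factor i, smul_zero,
    Matrix.zero_mul]

theorem projection_mul_eq_smul_one_kronecker_mul [Fintype α] [Unique α] [DecidableEq α] (c : R)
    (A : Matrix τ α R) (B : Matrix n o R) (x : Matrix (α × o) k R) :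
    (w ⊗ₖ W) * (((1 : Matrix τ τ R) ⊗ₖ H) * ((c • (A ⊗ₖ B)) * x)) =
      c • ((w * A) default default • (((1 : Matrix α α R) ⊗ₖ (W * H * B)) * x)) := by
  rw [← Matrix.mul_assoc (1 ⊗ₖ H), ← Matrix.mul_assoc (w ⊗ₖ W), Matrix.mul_smul, Matrix.mul_smul,
    kronecker_mul_one_kronecker_mul_kronecker, kronecker_eq_smul_one_kronecker, Matrix.smul_mul,
    Matrix.smul_mul]

end Projection

/-- The normalizations `a/√N`, `b₁/√N`, `b₂/√N` become arbitrary scalars `cA`, `cf`, `cg`, the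
amplitudes `√γ` arbitrary scalars `sg`, `sA`, `s`, and `S` is the set of group-G₁ interferers. -/
theorem blindIA_groupG2_femtocell_projection_general
    {R α α' α'' β τ ν κ Λ ι μ ρ o k : Type*} [CommSemiring R]
    [Fintype α] [Unique α] [DecidableEq α] [Fintype α'] [Fintype α'']
    [Fintype τ] [DecidableEq τ] [Fintype ν] [DecidableEq ν]
    [Fintype κ] [Fintype ι] [Fintype μ] [Fintype ρ] [Fintype o]
    (S : Finset Λ) {cA cf cg sg sA : R} {s : Λ → R}
    {v : κ → Matrix α' τ R} {V : κ → Matrix (τ × ν) (α' × ν) R}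
    (hV : ∀ i, V i = cA • ((v i)ᵀ ⊗ₖ (1 : Matrix ν ν R)))
    {ξ : Λ → ι → Matrix α'' τ R} {r : Λ → Matrix ν ρ R} {q : Λ → ι → Matrix ρ μ R}
    {Vf : Λ → Matrix (τ × ν) (α'' × μ) R}
    (hVf : ∀ l ∈ S, Vf l = cf • ∑ i, (ξ l i)ᵀ ⊗ₖ (r l * q l i))
    {vg : Matrix α τ R} {e : Matrix ν o R} {Vg : Matrix (τ × ν) (α × o) R}
    (hVg : Vg = cg • (vgᵀ ⊗ₖ e))
    {hg hA : Matrix ν ν R} {hc : Λ → Matrix ν ν R}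
    {w : Matrix α τ R} {W : Matrix β ν R}
    (hwv : ∀ i, w * (v i)ᵀ = 0) (hWr : ∀ l ∈ S, W * hc l * r l = 0)
    {U : Matrix (α × o) k R} {u : κ → Matrix (α' × ν) k R} {Uf : Λ → Matrix (α'' × μ) k R}
    {Z y : Matrix (τ × ν) k R}
    (hy : y = sg • (((1 : Matrix τ τ R) ⊗ₖ hg) * (Vg * U))
        + sA • (((1 : Matrix τ τ R) ⊗ₖ hA) * ∑ i, V i * u i)
        + ∑ l ∈ S, s l • (((1 : Matrix τ τ R) ⊗ₖ hc l) * (Vf l * Uf l)) + Z)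
    {P : Matrix (α × β) (τ × ν) R} (hP : P = w ⊗ₖ W) :
    P * y = cg • ((w * vgᵀ) default default •
      (((1 : Matrix α α R) ⊗ₖ (sg • (W * hg * e))) * U)) + P * Z := by
  have macrocell : P * (((1 : Matrix τ τ R) ⊗ₖ hA) * ∑ i, V i * u i) = 0 := by
    simp only [hP, hV]
    exact projection_mul_sum_eq_zero_of_time_orthogonal w W hA cA hwv _ u
  have femtocell (l : Λ) (hl : l ∈ S) :
      P * (((1 : Matrix τ τ R) ⊗ₖ hc l) * (Vf l * Uf l)) = 0 := by
    rw [hP, hVf l hl]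
    exact projection_mul_eq_zero_of_space_orthogonal w W (hc l) cf (hWr l hl) _ (q l) (Uf l)
  have femtocells : P * ∑ l ∈ S, s l • (((1 : Matrix τ τ R) ⊗ₖ hc l) * (Vf l * Uf l)) = 0 := by
    rw [Matrix.mul_sum]
    exact Finset.sum_eq_zero fun l hl => by rw [Matrix.mul_smul, femtocell l hl, smul_zero]
  have own : P * (((1 : Matrix τ τ R) ⊗ₖ hg) * (Vg * U)) =
      cg • ((w * vgᵀ) default default • (((1 : Matrix α α R) ⊗ₖ (W * hg * e)) * U)) := by
    rw [hP, hVg, projection_mul_eq_smul_one_kronecker_mul]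
  rw [hy, Matrix.mul_add, Matrix.mul_add, Matrix.mul_add, Matrix.mul_smul, Matrix.mul_smul,
    macrocell, femtocells, own, smul_zero, add_zero, add_zero, kronecker_smul, Matrix.smul_mul,
    smul_comm sg, smul_comm sg]

/-- Theorem 13, Blind IA, group-G₂ femtocell projection: the projection
`P = w ⊗ W` removes the macrocell interference and all group-G₁ femtocell
interference at the group-G₂ femtocell receiver, leaving the scalar effective channel
`(b₂/√N)·(w·v_gᵀ)·(√γ_g·W·h_g·e₂)` acting on the data `U`. The group-G₂ index
(the paper's `l = 2`) is a distinguished `l₂ : Fin L`. -/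
theorem blindIA_groupG2_femtocell_projection
    (T N K L M p : ℕ) (hT : 0 < T) (hN : 0 < N) (hK : 0 < K) (hL : 0 < L)
    (hM : 0 < M) (hp : 0 < p)
    (l₂ : Fin L)
    (a b₁ b₂ : ℝ) (hapos : 0 < a) (hb₁ : 0 < b₁) (hb₂ : 0 < b₂)
    (γg γA : ℝ) (hγg : 0 < γg) (hγA : 0 < γA)
    (γ : Fin L → ℝ) (hγ : ∀ l, l ≠ l₂ → 0 < γ l)
    -- macrocell beamforming
    (v : Fin K → Matrix (Fin 1) (Fin T) ℂ)
    (V : Fin K → Matrix (Fin T × Fin N) (Fin 1 × Fin N) ℂ)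
    (hV : ∀ i, V i = ((a / Real.sqrt N : ℝ) : ℂ) •
      ((v i)ᵀ ⊗ₖ (1 : Matrix (Fin N) (Fin N) ℂ)))
    -- group-G₁ beamforming (interference), for l ≠ l₂
    (ξ : Fin L → Fin (T - 1) → Matrix (Fin 1) (Fin T) ℂ)
    (r : Matrix (Fin N) (Fin p) ℂ)
    (q : Fin L → Fin (T - 1) → Matrix (Fin p) (Fin M) ℂ)
    (Vf : Fin L → Matrix (Fin T × Fin N) (Fin 1 × Fin M) ℂ)
    (hVf : ∀ l, Vf l = ((b₁ / Real.sqrt N : ℝ) : ℂ) •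
      ∑ i : Fin (T - 1), ((ξ l i)ᵀ ⊗ₖ (r * q l i)))
    -- own (group G₂) beamforming
    (vg : Matrix (Fin 1) (Fin T) ℂ)
    (e₂ : Matrix (Fin N) (Fin 1) ℂ)
    (Vg : Matrix (Fin T × Fin N) (Fin 1 × Fin 1) ℂ)
    (hVg : Vg = ((b₂ / Real.sqrt N : ℝ) : ℂ) • (vgᵀ ⊗ₖ e₂))
    -- channels
    (hg hA : Matrix (Fin N) (Fin N) ℂ) (hc : Fin L → Matrix (Fin N) (Fin N) ℂ)
    -- projection building blocks and orthogonality assumptions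
    (w : Matrix (Fin 1) (Fin T) ℂ) (W : Matrix (Fin 1) (Fin N) ℂ)
    (hwv : ∀ i : Fin K, w * (v i)ᵀ = 0)
    (hWr : ∀ l, l ≠ l₂ → W * hc l * r = 0)
    -- data, noise, received signal, projection
    (U : Matrix (Fin 1 × Fin 1) (Fin 1) ℂ)
    (u : Fin K → Matrix (Fin 1 × Fin N) (Fin 1) ℂ)
    (Uf : Fin L → Matrix (Fin 1 × Fin M) (Fin 1) ℂ)
    (Z : Matrix (Fin T × Fin N) (Fin 1) ℂ)
    (y : Matrix (Fin T × Fin N) (Fin 1) ℂ)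
    (hy : y = (Real.sqrt γg : ℂ) •
            (((1 : Matrix (Fin T) (Fin T) ℂ) ⊗ₖ hg) * (Vg * U))
        + (Real.sqrt γA : ℂ) •
            (((1 : Matrix (Fin T) (Fin T) ℂ) ⊗ₖ hA) * (∑ i : Fin K, V i * u i))
        + (∑ l ∈ Finset.univ.erase l₂, (Real.sqrt (γ l) : ℂ) •
            (((1 : Matrix (Fin T) (Fin T) ℂ) ⊗ₖ hc l) * (Vf l * Uf l)))
        + Z)
    (P : Matrix (Fin 1 × Fin 1) (Fin T × Fin N) ℂ)
    (hP : P = w ⊗ₖ W) :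
    P * y = ((b₂ / Real.sqrt N : ℝ) : ℂ) •
      ((w * vgᵀ) 0 0 •
        ((((1 : Matrix (Fin 1) (Fin 1) ℂ) ⊗ₖ
            ((Real.sqrt γg : ℂ) • (W * hg * e₂))) * U)))
      + P * Z := by
  exact blindIA_groupG2_femtocell_projection_general (Finset.univ.erase l₂) hV
    (fun l _ => hVf l) hVg hwv (fun l hl => hWr l (Finset.ne_of_mem_erase hl)) hy hP
end
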